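/- Let K ≥ 1, let X be a real number, and let a = (a_0, ..., a_K) be a nonzero vector of real numbers. Define F_{X,a}(x) = ∑_{k=0}^{K} a_k cos(kx) + X·∑_{k=0}^{K} a_k sin(kx), and let F_{X,ā} be the analogous function with the reversed coefficient vector ā = (a_K, ..., a_0). Then Z(F_{X,a}) + Z(F_{X,ā}) ≥ 2K, where Z(f) denotes the number of zeros of f in [0, 2π) counted with multiplicity. -/

import Mathlib

open Real Set
open scoped ENNReal

/-- The multiplicity of a zero `x` of `f`: the least `n ≥ 1` such that the
`n`-th derivative of `f` at `x` is nonzero. -/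
noncomputable def zeroMult (f : ℝ → ℝ) (x : ℝ) : ℕ :=
  sInf {n : ℕ | 1 ≤ n ∧ iteratedDeriv n f x ≠ 0}

/-- The number of zeros of `f` in one period `[0, 2π)`, counted with multiplicity. -/
noncomputable def Zcount (f : ℝ → ℝ) : ℝ≥0∞ :=
  ∑' x : {x : ℝ // x ∈ Set.Ico (0 : ℝ) (2 * Real.pi) ∧ f x = 0},
    (zeroMult f x.1 : ℝ≥0∞)

/-!
Write `F_{X,a}(x) = Re ((1 - iX) P(e^{ix}))` with `P(z) = ∑ a_k z^k`. Factoring `P` over `ℂ` shows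
that `P(e^{ix}) = r(x) e^{iφ(x)}` with `r` real and `φ` continuous, where `φ` grows by `Nπ` over one
period and `0 ≤ N ≤ 2K`: a root inside, on or outside the unit circle contributes `2`, `1` or `0`
to `N`. Reversing the coefficients replaces `P(e^{ix})` by `e^{iKx} conj (P(e^{ix}))`, whose phase
`Kx - φ(x)` grows by `(2K - N)π`. A phase growing by `nπ` meets the zeros of the cosine at least `n`
times, so the two functions have at least `N + (2K - N) = 2K` distinct zeros together.
-/

open scoped ComplexConjugate

open Complex (I)

/-- The set of zeros of `f` in one period `[0, 2π)`, without multiplicities. -/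
def periodZeros (f : ℝ → ℝ) : Set ℝ :=
  {x | x ∈ Ico 0 (2 * π) ∧ f x = 0}

/-- The complex trigonometric polynomial `∑ a_k e^{ikx}`. -/
noncomputable def trigSum {K : ℕ} (a : Fin (K + 1) → ℂ) (x : ℝ) : ℂ :=
  ∑ k : Fin (K + 1), a k * Complex.exp (x * I) ^ (k : ℕ)

/-- The function `F_{X,a}`, with the same coefficients on its cosine and its sine part. -/
noncomputable def mixedTrig {K : ℕ} (X : ℝ) (a : Fin (K + 1) → ℝ) (x : ℝ) : ℝ :=
  (∑ k : Fin (K + 1), a k * cos ((k : ℕ) * x)) +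
    X * ∑ k : Fin (K + 1), a k * sin ((k : ℕ) * x)

/-- `f` has a continuous phase which grows by `N` half turns over `[0, 2π]`. The real
factor `r` may vanish or change sign, so `f` may pass through the origin; a closed curve can then
gain an odd multiple of `π`. -/
def HasHalfTurns (f : ℝ → ℂ) (N : ℤ) : Prop :=
  ∃ r φ : ℝ → ℝ, Continuous φ ∧ φ (2 * π) = φ 0 + N * π ∧ ∀ x, f x = r x * Complex.exp (φ x * I)

namespace HasHalfTurns

theorem mul {f g : ℝ → ℂ} {M N : ℤ} (hf : HasHalfTurns f M) (hg : HasHalfTurns g N) :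
    HasHalfTurns (fun x => f x * g x) (M + N) := by
  obtain ⟨r, φ, hφ, hφ_period, hf⟩ := hf
  obtain ⟨s, ψ, hψ, hψ_period, hg⟩ := hg
  refine ⟨fun x => r x * s x, fun x => φ x + ψ x, hφ.add hψ, ?_, fun x => ?_⟩
  · simp only [hφ_period, hψ_period]
    push_cast
    ring
  · simp only [hf, hg]
    push_cast
    rw [add_mul, Complex.exp_add]
    ring

theorem conj_comp {f : ℝ → ℂ} {N : ℤ} (hf : HasHalfTurns f N) :
    HasHalfTurns (fun x => conj (f x)) (-N) := by
  obtain ⟨r, φ, hφ, hφ_period, hf⟩ := hf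
  refine ⟨r, fun x => -φ x, hφ.neg, ?_, fun x => ?_⟩
  · simp only [hφ_period]
    push_cast
    ring
  · simp [hf, ← Complex.exp_conj]

end HasHalfTurns

theorem hasHalfTurns_zero_of_mem_slitPlane {f : ℝ → ℂ} (hf : Continuous f)
    (hslit : ∀ x, f x ∈ Complex.slitPlane) (hperiod : f (2 * π) = f 0) : HasHalfTurns f 0 := by
  refine ⟨fun x => ‖f x‖, fun x => (f x).arg, ?_, by simp [hperiod], fun x => ?_⟩
  · exact continuous_iff_continuousAt.2 fun x =>
      (Complex.continuousAt_arg (hslit x)).comp hf.continuousAt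
  · rw [Complex.norm_mul_exp_arg_mul_I]

theorem hasHalfTurns_const (c : ℂ) : HasHalfTurns (fun _ => c) 0 :=
  ⟨fun _ => ‖c‖, fun _ => c.arg, continuous_const, by simp, fun _ => by simp⟩

theorem hasHalfTurns_exp_pow (n : ℕ) :
    HasHalfTurns (fun x : ℝ => Complex.exp (x * I) ^ n) (2 * n) := by
  refine ⟨fun _ => 1, fun x => n * x, by fun_prop, by push_cast; ring, fun x => ?_⟩
  simp only [← Complex.exp_nat_mul]
  push_cast
  ring_nf

theorem exp_sub_exp_eq_two_mul_sin_mul_exp (x θ : ℝ) :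
    Complex.exp (x * I) - Complex.exp (θ * I) =
      (2 * sin ((x - θ) / 2) : ℝ) * Complex.exp (((x + θ) / 2 + π / 2 : ℝ) * I) := by
  have hx : Complex.exp (x * I) =
      Complex.exp ((x + θ) / 2 * I) * Complex.exp ((x - θ) / 2 * I) := by
    rw [← Complex.exp_add]
    ring_nf
  have hθ : Complex.exp (θ * I) =
      Complex.exp ((x + θ) / 2 * I) * Complex.exp (-((x - θ) / 2) * I) := by
    rw [← Complex.exp_add]
    ring_nf
  push_cast
  rw [hx, hθ, add_mul, Complex.exp_add, Complex.exp_pi_div_two_mul_I, Complex.sin]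
  linear_combination Complex.exp ((x + θ) / 2 * I) *
    (Complex.exp ((x - θ) / 2 * I) - Complex.exp (-((x - θ) / 2) * I)) * Complex.I_sq

section LinearFactor

variable {α : ℂ}

theorem hasHalfTurns_exp_sub_of_norm_lt_one (hα : ‖α‖ < 1) :
    HasHalfTurns (fun x : ℝ => Complex.exp (x * I) - α) 2 := by
  have hfactor : HasHalfTurns (fun x : ℝ => 1 + -α * Complex.exp (-(x * I))) 0 := by
    refine hasHalfTurns_zero_of_mem_slitPlane (by fun_prop)
      (fun x => Complex.mem_slitPlane_of_norm_lt_one ?_) ?_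
    · rw [norm_mul, norm_neg, ← neg_mul, ← Complex.ofReal_neg, Complex.norm_exp_ofReal_mul_I,
        mul_one]
      exact hα
    · simp [Complex.exp_neg, Complex.exp_two_pi_mul_I]
  convert (hasHalfTurns_exp_pow 1).mul hfactor using 2 with x
  · rw [pow_one, mul_add, mul_one, mul_left_comm, ← Complex.exp_add, add_neg_cancel,
      Complex.exp_zero, mul_one, sub_eq_add_neg]
  · norm_num

theorem hasHalfTurns_exp_sub_of_norm_eq_one (hα : ‖α‖ = 1) :
    HasHalfTurns (fun x : ℝ => Complex.exp (x * I) - α) 1 := by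
  refine ⟨fun x => 2 * sin ((x - α.arg) / 2), fun x => (x + α.arg) / 2 + π / 2, by fun_prop,
    by push_cast; ring, fun x => ?_⟩
  rw [← exp_sub_exp_eq_two_mul_sin_mul_exp]
  simpa [hα] using (Complex.norm_mul_exp_arg_mul_I α).symm

theorem hasHalfTurns_exp_sub_of_one_lt_norm (hα : 1 < ‖α‖) :
    HasHalfTurns (fun x : ℝ => Complex.exp (x * I) - α) 0 := by
  have hα₀ : α ≠ 0 := norm_pos_iff.1 (one_pos.trans hα)
  have hfactor : HasHalfTurns (fun x : ℝ => 1 + -α⁻¹ * Complex.exp (x * I)) 0 := by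
    refine hasHalfTurns_zero_of_mem_slitPlane (by fun_prop)
      (fun x => Complex.mem_slitPlane_of_norm_lt_one ?_) ?_
    · rw [norm_mul, norm_neg, norm_inv, Complex.norm_exp_ofReal_mul_I, mul_one]
      exact inv_lt_one_of_one_lt₀ hα
    · simp [Complex.exp_two_pi_mul_I]
  convert (hasHalfTurns_const (-α)).mul hfactor using 2 with x
  · field_simp
    ring
  · rw [add_zero]

theorem exists_hasHalfTurns_exp_sub (α : ℂ) :
    ∃ N : ℕ, N ≤ 2 ∧ HasHalfTurns (fun x : ℝ => Complex.exp (x * I) - α) N := by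
  rcases lt_trichotomy ‖α‖ 1 with hα | hα | hα
  · exact ⟨2, le_rfl, hasHalfTurns_exp_sub_of_norm_lt_one hα⟩
  · exact ⟨1, one_le_two, hasHalfTurns_exp_sub_of_norm_eq_one hα⟩
  · exact ⟨0, Nat.zero_le _, hasHalfTurns_exp_sub_of_one_lt_norm hα⟩

end LinearFactor

theorem exists_hasHalfTurns_prod_exp_sub (s : Multiset ℂ) :
    ∃ N : ℕ, N ≤ 2 * s.card ∧
      HasHalfTurns (fun x : ℝ => (s.map fun α => Complex.exp (x * I) - α).prod) N := by
  induction s using Multiset.induction_on with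
  | empty => exact ⟨0, Nat.zero_le _, by simpa using hasHalfTurns_const 1⟩
  | cons α s ih =>
    obtain ⟨N, hN, hs⟩ := ih
    obtain ⟨M, hM, hα⟩ := exists_hasHalfTurns_exp_sub α
    exact ⟨M + N, by rw [Multiset.card_cons]; omega, by simpa using hα.mul hs⟩

theorem exists_hasHalfTurns_eval_exp (P : Polynomial ℂ) :
    ∃ N : ℕ, N ≤ 2 * P.natDegree ∧ HasHalfTurns (fun x : ℝ => P.eval (Complex.exp (x * I))) N := by
  obtain ⟨N, hN, hroots⟩ := exists_hasHalfTurns_prod_exp_sub P.roots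
  refine ⟨N, hN.trans (Nat.mul_le_mul_left 2 P.card_roots'), ?_⟩
  convert (hasHalfTurns_const P.leadingCoeff).mul hroots using 2 with x
  · exact (IsAlgClosed.splits P).eval_eq_prod_roots _
  · rw [zero_add]

theorem exists_hasHalfTurns_trigSum {K : ℕ} (a : Fin (K + 1) → ℂ) :
    ∃ N : ℕ, N ≤ 2 * K ∧ HasHalfTurns (trigSum a) N := by
  let P : Polynomial ℂ := ∑ k, Polynomial.C (a k) * Polynomial.X ^ (k : ℕ)
  have hdeg : P.natDegree ≤ K := Polynomial.natDegree_sum_le_of_forall_le _ _ fun k _ =>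
    (Polynomial.natDegree_C_mul_X_pow_le _ _).trans (Nat.lt_succ_iff.1 k.2)
  have heval : (fun x : ℝ => P.eval (Complex.exp (x * I))) = trigSum a := by
    funext x
    simp [P, trigSum, Polynomial.eval_finsetSum]
  obtain ⟨N, hN, hP⟩ := exists_hasHalfTurns_eval_exp P
  exact ⟨N, hN.trans (Nat.mul_le_mul_left 2 hdeg), heval ▸ hP⟩

theorem trigSum_conj_rev {K : ℕ} (a : Fin (K + 1) → ℂ) (x : ℝ) :
    trigSum (fun k => conj (a k.rev)) x = Complex.exp (x * I) ^ K * conj (trigSum a x) := by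
  have hunit : Complex.exp (x * I) * conj (Complex.exp (x * I)) = 1 := by
    rw [Complex.mul_conj']
    simp
  rw [trigSum, trigSum, ← Equiv.sum_comp Fin.revPerm, map_sum, Finset.mul_sum]
  refine Finset.sum_congr rfl fun k _ => ?_
  have hK : ((k.rev : Fin (K + 1)) : ℕ) + k = K := by
    rw [Fin.val_rev]
    omega
  calc conj (a k.rev.rev) * Complex.exp (x * I) ^ (k.rev : ℕ)
      = conj (a k) * Complex.exp (x * I) ^ (k.rev : ℕ) *
          (Complex.exp (x * I) * conj (Complex.exp (x * I))) ^ (k : ℕ) := by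
        rw [hunit, one_pow, mul_one, Fin.rev_rev]
    _ = Complex.exp (x * I) ^ ((k.rev : ℕ) + k) * conj (a k * Complex.exp (x * I) ^ (k : ℕ)) := by
        rw [map_mul, map_pow]
        ring
    _ = Complex.exp (x * I) ^ K * conj (a k * Complex.exp (x * I) ^ (k : ℕ)) := by rw [hK]

theorem natCast_le_encard_zeros_cos_comp {ψ : ℝ → ℝ} {s t : ℝ} {N : ℕ} (hst : s ≤ t)
    (hψ : ContinuousOn ψ (Icc s t)) (hgrowth : ψ s + N * π ≤ ψ t) :
    (N : ℕ∞) ≤ {x | x ∈ Ico s t ∧ cos (ψ x) = 0}.encard := by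
  -- The first zero of the cosine at or after `ψ s`.
  set θ := toIcoMod pi_pos (ψ s) (π / 2) with hθ_def
  obtain ⟨hθ_ge, hθ_lt⟩ := toIcoMod_mem_Ico pi_pos (ψ s) (π / 2)
  have hcos (n : ℕ) : cos (θ + n * π) = 0 := by
    rw [cos_add_nat_mul_pi, hθ_def, ← self_sub_toIcoDiv_zsmul, zsmul_eq_mul, cos_sub_int_mul_pi,
      cos_pi_div_two, mul_zero, mul_zero]
  have hinj : Function.Injective fun i : Fin N => θ + (i : ℕ) * π := fun i j hij =>
    Fin.ext (Nat.cast_injective (mul_right_cancel₀ pi_ne_zero (add_left_cancel hij)))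
  have hrange : range (fun i : Fin N => θ + (i : ℕ) * π) ⊆
      ψ '' {x | x ∈ Ico s t ∧ cos (ψ x) = 0} := by
    rintro _ ⟨i, rfl⟩
    have hi : ((i : ℕ) + 1 : ℝ) * π ≤ N * π := by
      gcongr
      exact_mod_cast i.2
    have hmem : θ + (i : ℕ) * π ∈ Ico (ψ s) (ψ t) :=
      ⟨le_add_of_le_of_nonneg hθ_ge (by positivity), by linarith⟩
    obtain ⟨x, hx, hψx⟩ := intermediate_value_Ico hst hψ hmem
    exact ⟨x, ⟨hx, by rw [hψx, hcos]⟩, hψx⟩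
  calc (N : ℕ∞) ≤ (range fun i : Fin N => θ + (i : ℕ) * π).encard := by
        simpa using hinj.encard_range
    _ ≤ (ψ '' {x | x ∈ Ico s t ∧ cos (ψ x) = 0}).encard := encard_le_encard hrange
    _ ≤ {x | x ∈ Ico s t ∧ cos (ψ x) = 0}.encard := encard_image_le _ _

theorem HasHalfTurns.natCast_le_encard_periodZeros_re {f : ℝ → ℂ} {N : ℕ}
    (hf : HasHalfTurns f N) : (N : ℕ∞) ≤ (periodZeros fun x => (f x).re).encard := by
  obtain ⟨r, φ, hφ, hφ_period, hf⟩ := hf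
  refine (natCast_le_encard_zeros_cos_comp two_pi_pos.le hφ.continuousOn
    (by simpa using hφ_period.ge)).trans (encard_le_encard ?_)
  rintro x ⟨hx, hcos⟩
  refine ⟨hx, ?_⟩
  simp only [hf, Complex.re_ofReal_mul, Complex.exp_ofReal_mul_I_re, hcos, mul_zero]

theorem palindromic_mixed_trig_zero_count_general {K : ℕ} (a : Fin (K + 1) → ℂ) (c d : ℂ) :
    2 * K ≤ (periodZeros fun x => (c * trigSum a x).re).encard +
      (periodZeros fun x => (d * trigSum (fun k => conj (a k.rev)) x).re).encard := by
  obtain ⟨N, hN, ha⟩ := exists_hasHalfTurns_trigSum a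
  have hleft : HasHalfTurns (fun x => c * trigSum a x) N := by
    simpa using (hasHalfTurns_const c).mul ha
  have hright : HasHalfTurns (fun x => d * trigSum (fun k => conj (a k.rev)) x)
      ((2 * K - N : ℕ) : ℤ) := by
    simpa [trigSum_conj_rev, Nat.cast_sub hN, sub_eq_add_neg] using
      (hasHalfTurns_const d).mul ((hasHalfTurns_exp_pow K).mul ha.conj_comp)
  calc (2 * K : ℕ∞) = (N : ℕ∞) + ((2 * K - N : ℕ) : ℕ∞) := by
        exact_mod_cast (Nat.add_sub_of_le hN).symm
    _ ≤ _ := add_le_add hleft.natCast_le_encard_periodZeros_re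
        hright.natCast_le_encard_periodZeros_re

theorem one_le_zeroMult {f : ℝ → ℝ} (hf : AnalyticOnNhd ℝ f univ) (hf₀ : f ≠ 0) {x : ℝ}
    (hx : f x = 0) : 1 ≤ zeroMult f x := by
  suffices h : {n : ℕ | 1 ≤ n ∧ iteratedDeriv n f x ≠ 0}.Nonempty from (Nat.sInf_mem h).1
  by_contra hempty
  have hderiv (n : ℕ) : iteratedDeriv n f x = 0 := by
    rcases Nat.eq_zero_or_pos n with rfl | hn
    · rwa [iteratedDeriv_zero]
    · by_contra h
      exact hempty ⟨n, hn, h⟩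
  have horder : analyticOrderAt f x = ⊤ := ENat.eq_top_iff_forall_ge.2 fun n =>
    (natCast_le_analyticOrderAt_iff_iteratedDeriv_eq_zero (hf x (mem_univ x))).2
      fun i _ => hderiv i
  refine hf₀ (funext fun y => ?_)
  exact hf.eqOn_zero_of_preconnected_of_eventuallyEq_zero isPreconnected_univ (mem_univ x)
    (analyticOrderAt_eq_top.1 horder) (mem_univ y)

theorem encard_periodZeros_le_Zcount {f : ℝ → ℝ} (hf : AnalyticOnNhd ℝ f univ) (hf₀ : f ≠ 0) :
    ((periodZeros f).encard : ℝ≥0∞) ≤ Zcount f := by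
  rw [← ENNReal.tsum_set_one]
  refine ENNReal.tsum_le_tsum fun x => ?_
  exact_mod_cast one_le_zeroMult hf hf₀ x.2.2

theorem linearIndependent_cos_nat_mul :
    LinearIndependent ℝ fun (k : ℕ) (x : ℝ) => cos (k * x) := by
  let evalCos : Polynomial ℝ →ₗ[ℝ] ℝ → ℝ := LinearMap.pi fun x => Polynomial.leval (cos x)
  have hker : LinearMap.ker evalCos = ⊥ := by
    refine LinearMap.ker_eq_bot'.2 fun P hP => Polynomial.eq_zero_of_infinite_isRoot P ?_
    refine (Icc_infinite (show (-1 : ℝ) < 1 by norm_num)).mono fun y hy => ?_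
    simpa [evalCos, cos_arccos hy.1 hy.2] using congrFun hP (arccos y)
  have heval : evalCos ∘ Polynomial.Chebyshev.chebyshevTsequence ℝ =
      fun (k : ℕ) (x : ℝ) => cos (k * x) := by
    funext k x
    exact Polynomial.Chebyshev.T_real_cos x k
  rw [← heval]
  exact (Polynomial.Chebyshev.chebyshevTsequence ℝ).linearIndependent.map' evalCos hker

section MixedTrig

variable {K : ℕ} (X : ℝ) (a : Fin (K + 1) → ℝ)

theorem mixedTrig_eq_re :
    mixedTrig X a = fun x => ((1 - X * I) * trigSum (fun k => (a k : ℂ)) x).re := by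
  funext x
  have hterm (k : Fin (K + 1)) : Complex.exp (x * I) ^ (k : ℕ) =
      Complex.exp (((k : ℕ) * x : ℝ) * I) := by
    rw [← Complex.exp_nat_mul]
    push_cast
    ring_nf
  simp only [mixedTrig, trigSum, hterm, Complex.mul_re, Complex.re_sum, Complex.im_sum,
    Complex.im_ofReal_mul, Complex.exp_ofReal_mul_I_re,
    Complex.exp_ofReal_mul_I_im]
  simp

theorem analyticOnNhd_mixedTrig : AnalyticOnNhd ℝ (mixedTrig X a) univ := by
  intro x _
  unfold mixedTrig
  fun_prop

variable {a}

theorem mixedTrig_ne_zero (ha : a ≠ 0) : mixedTrig X a ≠ 0 := by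
  intro hzero
  have heven (x : ℝ) : ∑ k : Fin (K + 1), a k * cos ((k : ℕ) * x) = 0 := by
    have hpos := congrFun hzero x
    have hneg := congrFun hzero (-x)
    simp only [mixedTrig, mul_neg, cos_neg, sin_neg, Finset.sum_neg_distrib, Pi.zero_apply]
      at hpos hneg
    linarith
  have hindep := Fintype.linearIndependent_iff.1
    (linearIndependent_cos_nat_mul.comp _ (Fin.val_injective (n := K + 1)))
  exact ha (funext (hindep a (funext fun x => by simpa using heven x)))

theorem encard_periodZeros_mixedTrig_le_Zcount (ha : a ≠ 0) :
    ((periodZeros (mixedTrig X a)).encard : ℝ≥0∞) ≤ Zcount (mixedTrig X a) :=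
  encard_periodZeros_le_Zcount (analyticOnNhd_mixedTrig X a) (mixedTrig_ne_zero X ha)

end MixedTrig

theorem palindromic_mixed_trig_zero_count (K : ℕ) (hK : 1 ≤ K) (X : ℝ)
    (a : Fin (K + 1) → ℝ) (ha : a ≠ 0) :
    (2 * K : ℝ≥0∞) ≤
      Zcount (fun x => (∑ k : Fin (K + 1), a k * Real.cos ((k : ℕ) * x)) +
        X * ∑ k : Fin (K + 1), a k * Real.sin ((k : ℕ) * x)) +
      Zcount (fun x => (∑ k : Fin (K + 1), a (Fin.rev k) * Real.cos ((k : ℕ) * x)) +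
        X * ∑ k : Fin (K + 1), a (Fin.rev k) * Real.sin ((k : ℕ) * x)) := by
  have ha_rev : a ∘ Fin.rev ≠ 0 := fun h =>
    ha (funext fun k => by simpa using congrFun h k.rev)
  have hdistinct : 2 * K ≤ (periodZeros (mixedTrig X a)).encard +
      (periodZeros (mixedTrig X (a ∘ Fin.rev))).encard := by
    simp only [mixedTrig_eq_re, Function.comp_apply]
    simpa only [Complex.conj_ofReal] using
      palindromic_mixed_trig_zero_count_general (fun k => (a k : ℂ)) (1 - X * I) (1 - X * I)
  calc (2 * K : ℝ≥0∞) ≤ (periodZeros (mixedTrig X a)).encard +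
        (periodZeros (mixedTrig X (a ∘ Fin.rev))).encard := by exact_mod_cast hdistinct
    _ ≤ Zcount (mixedTrig X a) + Zcount (mixedTrig X (a ∘ Fin.rev)) :=
        add_le_add (encard_periodZeros_mixedTrig_le_Zcount X ha)
          (encard_periodZeros_mixedTrig_le_Zcount X ha_rev)
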